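/- Let 𝐊 be a class of T0 topological spaces such that: every sober space is a 𝐊-space; any space homeomorphic to a 𝐊-space is a 𝐊-space; every 𝐊-space is a d-space; and 𝐊 is adequate. Let P be a poset such that the irreducible closed subsets of Σ P are exactly the sets ↓x for x ∈ P together with P itself, and such that Σ P is not a 𝐊-space. Then the following are equivalent: (1) Σ P_⊤ is a 𝐊-space, where P_⊤ is P with a new largest element ⊤ adjoined; (2) the 𝐊-reflection of Σ P exists and is a Scott space, i.e. there exist a poset Q and a continuous map ξ : Σ P → Σ Q such that Σ Q is a 𝐊-space and ⟨Σ Q, ξ⟩ is a 𝐊-reflection of Σ P. Moreover, when (1) holds, Σ P_⊤ with the inclusion map i : Σ P → Σ P_⊤, i(x) = x, is a 𝐊-reflection of Σ P. -/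

import Mathlib

universe u v

open Set

/-- The specialization order on a topological space: `specLE x y` iff `x ∈ closure {y}`. -/
def specLE {X : Type*} [TopologicalSpace X] (x y : X) : Prop :=
  x ∈ closure ({y} : Set X)

/-- `a` is an upper bound of `D` with respect to the specialization order. -/
def specUB {X : Type*} [TopologicalSpace X] (D : Set X) (a : X) : Prop :=
  ∀ d ∈ D, specLE d a

/-- `a` is a least upper bound of `D` with respect to the specialization order. -/
def specLUB {X : Type*} [TopologicalSpace X] (D : Set X) (a : X) : Prop :=
  specUB D a ∧ ∀ b, specUB D b → specLE a b

/-- `U` is Scott open with respect to the specialization order. -/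
def ScottOpenSpec {X : Type*} [TopologicalSpace X] (U : Set X) : Prop :=
  (∀ x y, specLE x y → x ∈ U → y ∈ U) ∧
  ∀ D : Set X, D.Nonempty → DirectedOn specLE D → ∀ a, specLUB D a → a ∈ U →
    (D ∩ U).Nonempty

/-- A d-space (monotone convergence space): a T0 space which is a dcpo in its
specialization order and in which every open set is Scott open with respect to
the specialization order. -/
def DSpace (X : Type*) [TopologicalSpace X] : Prop :=
  T0Space X ∧
  (∀ D : Set X, D.Nonempty → DirectedOn specLE D → ∃ a, specLUB D a) ∧
  (∀ U : Set X, IsOpen U → ScottOpenSpec U)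

/-- A set is saturated if it is an intersection of open sets. -/
def Saturated {X : Type*} [TopologicalSpace X] (A : Set X) : Prop :=
  ∃ 𝒰 : Set (Set X), (∀ U ∈ 𝒰, IsOpen U) ∧ A = ⋂₀ 𝒰

/-- A T0 space is well-filtered if every filtered (under reverse inclusion) family of
nonempty compact saturated sets whose intersection is contained in an open set `U`
has a member contained in `U`. -/
def WellFiltered (X : Type*) [TopologicalSpace X] : Prop :=
  T0Space X ∧
  ∀ 𝒦 : Set (Set X), 𝒦.Nonempty →
    (∀ K ∈ 𝒦, K.Nonempty ∧ IsCompact K ∧ Saturated K) →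
    DirectedOn (fun A B => B ⊆ A) 𝒦 →
    ∀ U : Set X, IsOpen U → ⋂₀ 𝒦 ⊆ U → ∃ K ∈ 𝒦, K ⊆ U

/-- A nonempty closed set which is irreducible. -/
def IrredClosed {X : Type*} [TopologicalSpace X] (A : Set X) : Prop :=
  A.Nonempty ∧ IsClosed A ∧
  ∀ F₁ F₂ : Set X, IsClosed F₁ → IsClosed F₂ → A ⊆ F₁ ∪ F₂ → (A ⊆ F₁ ∨ A ⊆ F₂)

/-- A space is sober if every irreducible closed set is the closure of a unique point. -/
def Sober (X : Type*) [TopologicalSpace X] : Prop :=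
  ∀ A : Set X, IrredClosed A → ∃! x : X, A = closure ({x} : Set X)

/-- The specialization preorder on a topological space. -/
def specPreorder (Y : Type*) [TopologicalSpace Y] : Preorder Y where
  le := specLE
  le_refl x := subset_closure rfl
  le_trans x y z hxy hyz :=
    closure_minimal (Set.singleton_subset_iff.mpr hyz) isClosed_closure hxy

/-- A Scott open subset of a poset: an upper set inaccessible by suprema of directed sets. -/
def IsScottOpen {P : Type*} [Preorder P] (U : Set P) : Prop :=
  IsUpperSet U ∧
  ∀ D : Set P, D.Nonempty → DirectedOn (· ≤ ·) D → ∀ a, IsLUB D a → a ∈ U →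
    (D ∩ U).Nonempty

/-- The Scott topology on a poset. `Σ P` is `P` equipped with `scottTop P`. -/
def scottTop (P : Type*) [Preorder P] : TopologicalSpace P where
  IsOpen := IsScottOpen
  isOpen_univ := by
    refine ⟨isUpperSet_univ, fun D hD _ _ _ _ => ?_⟩
    obtain ⟨d, hd⟩ := hD
    exact ⟨d, hd, trivial⟩
  isOpen_inter := by
    rintro U V ⟨hU1, hU2⟩ ⟨hV1, hV2⟩
    refine ⟨hU1.inter hV1, ?_⟩
    rintro D hne hdir a ha ⟨haU, haV⟩
    obtain ⟨d1, hd1D, hd1U⟩ := hU2 D hne hdir a ha haU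
    obtain ⟨d2, hd2D, hd2V⟩ := hV2 D hne hdir a ha haV
    obtain ⟨d3, hd3D, h13, h23⟩ := hdir d1 hd1D d2 hd2D
    exact ⟨d3, hd3D, hU1 h13 hd1U, hV1 h23 hd2V⟩
  isOpen_sUnion := by
    intro S hS
    refine ⟨isUpperSet_sUnion fun s hs => (hS s hs).1, ?_⟩
    rintro D hne hdir a ha ⟨U, hUS, haU⟩
    obtain ⟨d, hdD, hdU⟩ := (hS U hUS).2 D hne hdir a ha haU
    exact ⟨d, hdD, U, hUS, hdU⟩

/-- A dcpo: every nonempty directed subset has a least upper bound. -/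
def IsDcpo (P : Type*) [Preorder P] : Prop :=
  ∀ D : Set P, D.Nonempty → DirectedOn (· ≤ ·) D → ∃ a, IsLUB D a

/-- The way-below relation. -/
def wayBelow {P : Type*} [Preorder P] (x y : P) : Prop :=
  ∀ D : Set P, D.Nonempty → DirectedOn (· ≤ ·) D → ∀ a, IsLUB D a → y ≤ a →
    ∃ d ∈ D, x ≤ d

/-- A poset is Noetherian if every (nonempty) directed subset has a greatest member. -/
def Noetherian (P : Type*) [Preorder P] : Prop :=
  ∀ D : Set P, D.Nonempty → DirectedOn (· ≤ ·) D → ∃ m ∈ D, ∀ d ∈ D, d ≤ m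

/-- An ideal: a (nonempty) directed lower set. -/
def IsIdealSet {P : Type*} [Preorder P] (I : Set P) : Prop :=
  I.Nonempty ∧ DirectedOn (· ≤ ·) I ∧ IsLowerSet I

/-- The Alexandroff topology on a poset: the open sets are the upper sets. -/
def alexTop (P : Type*) [Preorder P] : TopologicalSpace P where
  IsOpen := IsUpperSet
  isOpen_univ := isUpperSet_univ
  isOpen_inter _ _ := IsUpperSet.inter
  isOpen_sUnion _ h := isUpperSet_sUnion h

/-- The space `X_⊤` obtained from `X` by adjoining a new top point `⊤` (here `none`):
the closed sets are the closed sets of `X` together with the whole space. -/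
def topTop (X : Type*) [TopologicalSpace X] : TopologicalSpace (Option X) where
  IsOpen V := V = ∅ ∨ ∃ U : Set X, IsOpen U ∧ V = insert none (some '' U)
  isOpen_univ := by
    refine Or.inr ⟨Set.univ, isOpen_univ, ?_⟩
    ext (_ | a) <;> simp
  isOpen_inter := by
    rintro V W (rfl | ⟨U₁, hU₁, rfl⟩) hW
    · exact Or.inl (by simp)
    rcases hW with rfl | ⟨U₂, hU₂, rfl⟩
    · exact Or.inl (by simp)
    · refine Or.inr ⟨U₁ ∩ U₂, hU₁.inter hU₂, ?_⟩
      ext (_ | a) <;> simp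
  isOpen_sUnion := by
    classical
    intro S hS
    by_cases h0 : ⋃₀ S = ∅
    · exact Or.inl h0
    · refine Or.inr ⟨{x : X | some x ∈ ⋃₀ S}, ?_, ?_⟩
      · have h1 : {x : X | some x ∈ ⋃₀ S} = ⋃ V ∈ S, some ⁻¹' V := by
          ext x; simp [Set.mem_sUnion]
        rw [h1]
        refine isOpen_biUnion fun V hV => ?_
        rcases hS V hV with rfl | ⟨U, hU, rfl⟩
        · rw [Set.preimage_empty]; exact isOpen_empty
        · have h2 : (some ⁻¹' (insert none (some '' U)) : Set X) = U := by
            ext x; simp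
          rw [h2]; exact hU
      · have hnone : (none : Option X) ∈ ⋃₀ S := by
          obtain ⟨v, V, hVS, hvV⟩ := Set.nonempty_iff_ne_empty.mpr h0
          rcases hS V hVS with rfl | ⟨U, hU, rfl⟩
          · exact absurd hvV (by simp)
          · exact ⟨_, hVS, by simp⟩
        ext (_ | a)
        · simp only [Set.mem_insert_iff, true_or, iff_true]
          exact hnone
        · simp [Set.mem_sUnion]

/-- A `𝐊`-set of a space `X` (relative to a class `K` of spaces): a set whose image
under any continuous map to a `𝐊`-space has the closure of a unique point as closure. -/
def IsKSet (K : (Y : Type u) → TopologicalSpace Y → Prop)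
    (X : Type u) [tX : TopologicalSpace X] (A : Set X) : Prop :=
  ∀ (Y : Type u) (tY : TopologicalSpace Y), K Y tY →
    ∀ f : X → Y, @Continuous X Y tX tY f →
      ∃! y : Y, @closure Y tY (f '' A) = @closure Y tY {y}

/-- `𝐊(X)`: the collection of closed `𝐊`-sets of `X`. -/
def KSets (K : (Y : Type u) → TopologicalSpace Y → Prop)
    (X : Type u) [TopologicalSpace X] : Set (Set X) :=
  {A : Set X | IsClosed A ∧ IsKSet K X A}

/-- The lower Vietoris topology on a family `G` of subsets of `X`, generated by the
sets `◊U = {A ∈ G | A ∩ U ≠ ∅}` for `U` open. -/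
def lowerVietoris {X : Type*} [TopologicalSpace X] (G : Set (Set X)) :
    TopologicalSpace ↥G :=
  TopologicalSpace.generateFrom
    {S : Set ↥G | ∃ U : Set X, IsOpen U ∧ S = {A : ↥G | ((A : Set X) ∩ U).Nonempty}}

/-- A class `K` of spaces is adequate if `P_H(𝐊(X))` is a `𝐊`-space for every T0 space `X`. -/
def Adequate (K : (Y : Type u) → TopologicalSpace Y → Prop) : Prop :=
  ∀ (X : Type u) (tX : TopologicalSpace X), @T0Space X tX →
    K ↥(@KSets K X tX) (@lowerVietoris X tX (@KSets K X tX))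

/-- `⟨Z, η⟩` is a `𝐊`-reflection of `X`. -/
def IsKReflection (K : (Y : Type u) → TopologicalSpace Y → Prop)
    (X : Type u) (tX : TopologicalSpace X)
    (Z : Type u) (tZ : TopologicalSpace Z) (η : X → Z) : Prop :=
  K Z tZ ∧ @Continuous X Z tX tZ η ∧
  ∀ (Y : Type u) (tY : TopologicalSpace Y), K Y tY →
    ∀ f : X → Y, @Continuous X Y tX tY f →
      ∃! g : Z → Y, @Continuous Z Y tZ tY g ∧ g ∘ η = f

/-- The carrier of the Johnstone poset `𝕁 = ℕ × (ℕ ∪ {ω})`. -/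
structure Johnstone where
  fst : ℕ
  snd : WithTop ℕ

/-- The Johnstone order: `(j, k) ≤ (m, n)` iff `j = m` and `k ≤ n`, or `n = ω` and `k ≤ m`. -/
instance : PartialOrder Johnstone where
  le p q := (p.fst = q.fst ∧ p.snd ≤ q.snd) ∨ (q.snd = ⊤ ∧ p.snd ≤ (q.fst : WithTop ℕ))
  le_refl p := Or.inl ⟨rfl, le_rfl⟩
  le_trans p q r hpq hqr := by
    rcases hpq with ⟨h1, h2⟩ | ⟨h1, h2⟩ <;> rcases hqr with ⟨h3, h4⟩ | ⟨h3, h4⟩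
    · exact Or.inl ⟨h1.trans h3, h2.trans h4⟩
    · exact Or.inr ⟨h3, h2.trans h4⟩
    · have hr : r.snd = ⊤ := top_le_iff.mp (h1 ▸ h4)
      exact Or.inr ⟨hr, h3 ▸ h2⟩
    · rw [h1] at h4
      exact absurd h4 (by simp)
  le_antisymm p q hpq hqp := by
    obtain ⟨pf, ps⟩ := p
    obtain ⟨qf, qs⟩ := q
    rcases hpq with ⟨h1, h2⟩ | ⟨h1, h2⟩ <;> rcases hqp with ⟨h3, h4⟩ | ⟨h3, h4⟩
    · dsimp at *
      cases h1
      cases le_antisymm h2 h4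
      rfl
    · dsimp at *
      rw [h3] at h2
      rw [top_le_iff.mp h2] at h4
      exact absurd h4 (by simp)
    · dsimp at *
      rw [h1] at h4
      rw [top_le_iff.mp h4] at h2
      exact absurd h2 (by simp)
    · dsimp at *
      rw [h3] at h2
      exact absurd h2 (by simp)

/-- The class of d-spaces. -/
def dClass : (Y : Type u) → TopologicalSpace Y → Prop := fun Y tY => @DSpace Y tY

/-- The class of well-filtered spaces. -/
def wfClass : (Y : Type u) → TopologicalSpace Y → Prop := fun Y tY => @WellFiltered Y tY

/-- The class of sober spaces. -/
def soberClass : (Y : Type u) → TopologicalSpace Y → Prop := fun Y tY => @Sober Y tY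

/-!
Write `𝐊(X)` for the closed `𝐊`-sets of `X` with the lower Vietoris topology. If it is a
`𝐊`-space, then it is the `𝐊`-reflection of `X` along `x ↦ cl {x}`: a `𝐊`-set `A` is irreducible
(test it on maps to the finite sober space `Prop × Prop`), so, as a point of `𝐊(X)`, it is the
generic point of the closure of the points `cl {x}` with `x ∈ A`, and a continuous map from `𝐊(X)`
to a T0 space is determined by its values on these points.

For `X = Σ P` the irreducible closed sets are the `↓x` and `P`. If `P` were not a `𝐊`-set, or were
some `↓x`, then `x ↦ ↓x` would be a homeomorphism from `Σ P` to the `𝐊`-space `𝐊(Σ P)`. So `P_⊤` is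
order isomorphic to `𝐊(Σ P)`, whose specialization order is inclusion. A Scott space `Σ Q`
reflecting `Σ P` is homeomorphic to `𝐊(Σ P)`, hence `Q ≃ P_⊤` and `Σ Q ≃ Σ P_⊤`. Conversely, a map
`f` from `Σ P` to a `𝐊`-space extends to `P_⊤` by sending `⊤` to the generic point of the closure of
its range. The extension is continuous because a directed set without upper bound is dense in
`Σ P`, and unique because `P` is dense in `Σ P_⊤` when the latter is a `𝐊`-space.
-/

open Topology

section Irreducible

variable {X : Type*} [TopologicalSpace X]

theorem irredClosed_iff {A : Set X} : IrredClosed A ↔ IsIrreducible A ∧ IsClosed A := by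
  rw [IrredClosed, IsIrreducible, isPreirreducible_iff_isClosed_union_isClosed]
  tauto

theorem exists_isGenericPoint_of_finite {S : Set X} (hS : IsIrreducible S) (hclosed : IsClosed S)
    (hfin : S.Finite) : ∃ x, IsGenericPoint x S := by
  classical
  obtain ⟨_, hmem, hsub⟩ := isIrreducible_iff_sUnion_isClosed.mp hS
    (hfin.toFinset.image fun x => closure {x})
    (by simp only [Finset.forall_mem_image, isClosed_closure, implies_true])
    (fun x hx => ⟨closure {x}, by simpa using ⟨x, hx, rfl⟩, subset_closure rfl⟩)
  obtain ⟨x, hx, rfl⟩ := Finset.mem_image.mp hmem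
  exact ⟨x, (closure_minimal (singleton_subset_iff.mpr (hfin.mem_toFinset.mp hx)) hclosed).antisymm
    hsub⟩

theorem sober_of_finite [Finite X] [T0Space X] : Sober X := by
  intro A hA
  obtain ⟨hirr, hclosed⟩ := irredClosed_iff.mp hA
  obtain ⟨x, hx⟩ := exists_isGenericPoint_of_finite hirr hclosed A.toFinite
  exact ⟨x, hx.symm, fun y hy => IsGenericPoint.eq hy.symm hx⟩

end Irreducible

section LowerVietoris

attribute [local instance] lowerVietoris

variable {X : Type*} [TopologicalSpace X] {G : Set (Set X)}

/-- The subbasic open set `◊U` of the lower Vietoris topology on a family `G` of sets. -/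
def diamond (G : Set (Set X)) (U : Set X) : Set G :=
  {A | ((A : Set X) ∩ U).Nonempty}

theorem isOpen_diamond {U : Set X} (hU : IsOpen U) : IsOpen (diamond G U) :=
  TopologicalSpace.isOpen_generateFrom_of_mem ⟨U, hU, rfl⟩

theorem lowerVietoris_isOpen_iff (hG : ∀ A ∈ G, IsIrreducible A) {O : Set G} :
    IsOpen O ↔ ∃ U, IsOpen U ∧ diamond G U = O := by
  refine ⟨fun hO => ?_, fun ⟨U, hU, h⟩ => h ▸ isOpen_diamond hU⟩
  induction hO with
  | basic O hO => exact hO.imp fun U hU => ⟨hU.1, hU.2.symm⟩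
  | univ =>
    refine ⟨univ, isOpen_univ, eq_univ_of_forall fun A => ?_⟩
    simpa only [diamond, mem_ofPred_eq, inter_univ] using (hG A A.2).nonempty
  | inter _ _ _ _ ihU ihV =>
    obtain ⟨U, hU, rfl⟩ := ihU
    obtain ⟨V, hV, rfl⟩ := ihV
    refine ⟨U ∩ V, hU.inter hV, Subset.antisymm ?_ ?_⟩
    · exact fun A ⟨x, hx, hxU, hxV⟩ => ⟨⟨x, hx, hxU⟩, ⟨x, hx, hxV⟩⟩
    · exact fun A ⟨hAU, hAV⟩ => (hG A A.2).isPreirreducible U V hU hV hAU hAV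
  | sUnion S _ ih =>
    choose! U hU hUS using ih
    refine ⟨⋃ O ∈ S, U O, isOpen_biUnion hU, ?_⟩
    ext A
    calc A ∈ diamond G (⋃ O ∈ S, U O) ↔ ∃ O ∈ S, A ∈ diamond G (U O) := by
          simp only [diamond, mem_ofPred_eq, inter_iUnion, nonempty_iUnion, exists_prop]
      _ ↔ ∃ O ∈ S, A ∈ O := exists_congr fun O => and_congr_right fun hO => by rw [hUS O hO]

theorem lowerVietoris_specializes_iff {A B : G} (hB : IsClosed (B : Set X)) :
    B ⤳ A ↔ A ≤ B := by
  constructor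
  · intro h x hxA
    by_contra hxB
    obtain ⟨y, hyB, hy⟩ := h.mem_open (isOpen_diamond hB.isOpen_compl) ⟨x, hxA, hxB⟩
    exact hy hyB
  · intro h
    refine Filter.tendsto_id'.mp (TopologicalSpace.tendsto_nhds_generateFrom_iff.mpr ?_)
    rintro _ ⟨U, hU, rfl⟩ hA
    exact (isOpen_diamond hU).mem_nhds (hA.mono (inter_subset_inter_left U h))

theorem lowerVietoris_continuous_of_isGenericPoint {Y : Type*} [TopologicalSpace Y] {f : X → Y}
    (hf : Continuous f) {g : G → Y} (hg : ∀ A : G, IsGenericPoint (g A) (closure (f '' A))) :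
    Continuous g := by
  refine continuous_def.mpr fun V hV => ?_
  have hpre : g ⁻¹' V = diamond G (f ⁻¹' V) := by
    ext A
    rw [mem_preimage, (hg A).mem_open_set_iff hV, closure_inter_open_nonempty_iff hV,
      image_inter_nonempty_iff]
    rfl
  exact hpre ▸ isOpen_diamond (hV.preimage hf)

variable (hG : ∀ x, closure {x} ∈ G)

/-- The map `x ↦ cl {x}` from a space into a family of sets containing all point closures; for the
closed `𝐊`-sets it is the unit of the `𝐊`-reflection. -/
def pointClosure (x : X) : G :=
  ⟨closure {x}, hG x⟩

theorem pointClosure_preimage_diamond {U : Set X} (hU : IsOpen U) :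
    pointClosure hG ⁻¹' diamond G U = U := by
  ext x
  exact (isGenericPoint_closure.mem_open_set_iff hU).symm

theorem isInducing_pointClosure : IsInducing (pointClosure hG) := by
  refine ⟨le_antisymm (continuous_iff_le_induced.mp (continuous_generateFrom_iff.mpr ?_)) ?_⟩
  · rintro _ ⟨U, hU, rfl⟩
    exact (pointClosure_preimage_diamond hG hU).symm ▸ hU
  · exact fun U hU => ⟨diamond G U, isOpen_diamond hU, pointClosure_preimage_diamond hG hU⟩

theorem isGenericPoint_closure_image_pointClosure (hirr : ∀ A ∈ G, IsIrreducible A) {A : G}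
    (hA : IsClosed (A : Set X)) :
    IsGenericPoint A (closure (pointClosure hG '' (A : Set X))) := by
  refine Subset.antisymm (closure_minimal ?_ isClosed_closure) (closure_minimal ?_ isClosed_closure)
  · refine singleton_subset_iff.mpr (mem_closure_iff.mpr fun O hO hAO => ?_)
    obtain ⟨U, hU, rfl⟩ := (lowerVietoris_isOpen_iff hirr).mp hO
    obtain ⟨x, hxA, hxU⟩ := hAO
    exact ⟨pointClosure hG x, (pointClosure_preimage_diamond hG hU).superset hxU, x, hxA, rfl⟩
  · rintro _ ⟨x, hx, rfl⟩
    exact specializes_iff_mem_closure.mp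
      ((lowerVietoris_specializes_iff hA).mpr (closure_minimal (singleton_subset_iff.mpr hx) hA))

end LowerVietoris

section Reflection

attribute [local instance] lowerVietoris

variable {K : (Y : Type u) → TopologicalSpace Y → Prop} {X : Type u} [TopologicalSpace X]

theorem isKSet_iff (hT0 : ∀ (Y : Type u) (tY : TopologicalSpace Y), K Y tY → @T0Space Y tY)
    {A : Set X} :
    IsKSet K X A ↔ ∀ (Y : Type u) [tY : TopologicalSpace Y], K Y tY → ∀ f : X → Y, Continuous f →
      ∃ y, IsGenericPoint y (closure (f '' A)) := by
  refine forall₅_congr fun Y tY hY f _ => ?_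
  have := hT0 Y tY hY
  exact ⟨fun ⟨y, hy, _⟩ => ⟨y, hy.symm⟩,
    fun ⟨y, hy⟩ => ⟨y, hy.symm, fun z hz => IsGenericPoint.eq hz.symm hy⟩⟩

theorem IsKSet.isIrreducible
    (hSober : ∀ (Y : Type u) (tY : TopologicalSpace Y), @Sober Y tY → K Y tY)
    {A : Set X} (hA : IsKSet K X A) : IsIrreducible A := by
  have image_irreducible : ∀ f : X → ULift.{u} (Prop × Prop), Continuous f →
      IsIrreducible (f '' A) := fun f hf => by
    obtain ⟨y, hy, -⟩ := hA _ _ (hSober _ _ sober_of_finite) f hf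
    exact isIrreducible_iff_closure.mp (hy ▸ isIrreducible_singleton.closure)
  refine ⟨(image_irreducible (fun _ => ⟨True, True⟩) continuous_const).nonempty.of_image, ?_⟩
  intro U V hU hV hAU hAV
  have hf : Continuous fun x => ULift.up.{u} ((x ∈ U), (x ∈ V)) :=
    continuous_uliftUp.comp ((continuous_Prop.mpr hU).prodMk (continuous_Prop.mpr hV))
  have hfst : IsOpen {p : ULift.{u} (Prop × Prop) | p.down.1} :=
    continuous_Prop.mp (continuous_fst.comp continuous_uliftDown)
  have hsnd : IsOpen {p : ULift.{u} (Prop × Prop) | p.down.2} :=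
    continuous_Prop.mp (continuous_snd.comp continuous_uliftDown)
  obtain ⟨_, ⟨x, hxA, rfl⟩, hxU, hxV⟩ := (image_irreducible _ hf).isPreirreducible _ _ hfst hsnd
    (image_inter_nonempty_iff.mpr hAU) (image_inter_nonempty_iff.mpr hAV)
  exact ⟨x, hxA, hxU, hxV⟩

theorem closure_singleton_mem_kSets
    (hT0 : ∀ (Y : Type u) (tY : TopologicalSpace Y), K Y tY → @T0Space Y tY) (x : X) :
    closure {x} ∈ KSets K X :=
  ⟨isClosed_closure, (isKSet_iff hT0).mpr fun _ _ _ f hf => ⟨f x, isGenericPoint_closure.image hf⟩⟩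

theorem isKReflection_pointClosure
    (hT0 : ∀ (Y : Type u) (tY : TopologicalSpace Y), K Y tY → @T0Space Y tY)
    (hSober : ∀ (Y : Type u) (tY : TopologicalSpace Y), @Sober Y tY → K Y tY)
    (hK : K (KSets K X) (lowerVietoris (KSets K X))) :
    IsKReflection K X ‹_› (KSets K X) (lowerVietoris (KSets K X))
      (pointClosure (closure_singleton_mem_kSets hT0)) := by
  refine ⟨hK, (isInducing_pointClosure _).continuous, fun Y tY hY f hf => ?_⟩
  have := hT0 Y tY hY
  choose g hg using fun A : KSets K X => (isKSet_iff hT0).mp A.2.2 Y hY f hf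
  refine ⟨g, ⟨lowerVietoris_continuous_of_isGenericPoint hf hg, funext fun x => ?_⟩, ?_⟩
  · exact (hg _).eq (isGenericPoint_closure.image hf)
  · rintro g' ⟨hg', rfl⟩
    funext A
    have hA := (isGenericPoint_closure_image_pointClosure (closure_singleton_mem_kSets hT0)
      (fun B hB => hB.2.isIrreducible hSober) A.2.1).image hg'
    rw [closure_image_closure hg', ← image_comp] at hA
    exact hA.eq (hg A)

theorem IsKReflection.nonempty_homeomorph {Y Z : Type u} [TopologicalSpace Y] [TopologicalSpace Z]
    {η : X → Y} {ξ : X → Z} (hη : IsKReflection K X ‹_› Y ‹_› η)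
    (hξ : IsKReflection K X ‹_› Z ‹_› ξ) : Nonempty (Y ≃ₜ Z) := by
  obtain ⟨hY, hηc, hη⟩ := hη
  obtain ⟨hZ, hξc, hξ⟩ := hξ
  obtain ⟨f, ⟨hf, hfη⟩, -⟩ := hη Z _ hZ ξ hξc
  obtain ⟨g, ⟨hg, hgξ⟩, -⟩ := hξ Y _ hY η hηc
  have hgf : g ∘ f = id := (hη Y _ hY η hηc).unique
    ⟨hg.comp hf, by rw [Function.comp_assoc, hfη, hgξ]⟩ ⟨continuous_id, rfl⟩
  have hfg : f ∘ g = id := (hξ Z _ hZ ξ hξc).unique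
    ⟨hf.comp hg, by rw [Function.comp_assoc, hgξ, hfη]⟩ ⟨continuous_id, rfl⟩
  exact ⟨⟨⟨f, g, congrFun hgf, congrFun hfg⟩, hf, hg⟩⟩

theorem nonempty_homeomorph_kSets [T0Space X]
    (hT0 : ∀ (Y : Type u) (tY : TopologicalSpace Y), K Y tY → @T0Space Y tY)
    (hgeneric : ∀ A ∈ KSets K X, ∃ x, IsGenericPoint x A) : Nonempty (X ≃ₜ KSets K X) := by
  refine ⟨(isInducing_pointClosure (closure_singleton_mem_kSets hT0)).isEmbedding
    |>.toHomeomorphOfSurjective fun A => ?_⟩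
  exact (hgeneric A A.2).imp fun x hx => Subtype.ext hx

theorem univ_mem_kSets_of_isEmpty_homeomorph [T0Space X]
    (hT0 : ∀ (Y : Type u) (tY : TopologicalSpace Y), K Y tY → @T0Space Y tY)
    (hSober : ∀ (Y : Type u) (tY : TopologicalSpace Y), @Sober Y tY → K Y tY)
    (hirr : ∀ A : Set X, IrredClosed A → (∃ x, IsGenericPoint x A) ∨ A = univ)
    (hX : IsEmpty (X ≃ₜ KSets K X)) : univ ∈ KSets K X ∧ ∀ x : X, ¬IsGenericPoint x univ := by
  obtain ⟨A, hA, hAx⟩ : ∃ A ∈ KSets K X, ¬∃ x, IsGenericPoint x A := by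
    by_contra! h
    exact not_isEmpty_iff.mpr (nonempty_homeomorph_kSets hT0 h) hX
  obtain rfl := (hirr A (irredClosed_iff.mpr ⟨hA.2.isIrreducible hSober, hA.1⟩)).resolve_left hAx
  exact ⟨hA, not_exists.mp hAx⟩

end Reflection

section Scott

theorem isScott_scottTop (P : Type*) [Preorder P] : @IsScott P univ _ (scottTop P) := by
  refine @IsScott.mk _ _ _ (scottTop P) (TopologicalSpace.ext_iff.mpr fun U => Iff.symm ?_)
  have hU := @IsScott.isOpen_iff_isUpperSet_and_dirSupInaccOn P univ _ (scott P univ) U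
    (@IsScott.mk _ _ _ (scott P univ) rfl)
  rwa [dirSupInaccOn_univ] at hU

variable {P : Type*} [Preorder P] [TopologicalSpace P] [IsScott P univ]

theorem scott_specializes_iff {x y : P} : y ⤳ x ↔ x ≤ y := by
  rw [specializes_iff_mem_closure, IsScott.closure_singleton, mem_Iic]

theorem isGenericPoint_iff_Iic_eq {x : P} {A : Set P} : IsGenericPoint x A ↔ Iic x = A := by
  rw [isGenericPoint_def, IsScott.closure_singleton]

theorem isIrreducible_of_directedOn {D : Set P} (hne : D.Nonempty) (hD : DirectedOn (· ≤ ·) D) :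
    IsIrreducible D := by
  refine ⟨hne, fun U V hU hV ⟨x, hxD, hxU⟩ ⟨y, hyD, hyV⟩ => ?_⟩
  obtain ⟨z, hzD, hxz, hyz⟩ := hD x hxD y hyD
  exact ⟨z, hzD, IsScott.isUpperSet_of_isOpen (D := univ) hU hxz hxU,
    IsScott.isUpperSet_of_isOpen (D := univ) hV hyz hyV⟩

theorem dense_of_directedOn_of_not_bddAbove
    (hirr : ∀ A : Set P, IrredClosed A → (∃ x, IsGenericPoint x A) ∨ A = univ) {D : Set P}
    (hne : D.Nonempty) (hD : DirectedOn (· ≤ ·) D) (hbdd : ¬BddAbove D) : Dense D := by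
  have hclosure := irredClosed_iff.mpr
    ⟨(isIrreducible_of_directedOn hne hD).closure, isClosed_closure⟩
  rcases hirr _ hclosure with ⟨x, hx⟩ | huniv
  · rw [isGenericPoint_iff_Iic_eq] at hx
    exact absurd ⟨x, fun d hd => hx.superset (subset_closure hd)⟩ hbdd
  · exact dense_iff_closure_eq.mpr huniv

theorem continuous_of_scottContinuous {Q : Type*} [Preorder Q] [TopologicalSpace Q] [IsScott Q univ]
    {f : P → Q} (hf : ScottContinuous f) : Continuous f :=
  (IsScott.scottContinuousOn_iff_continuous (D := univ) fun _ _ _ => mem_univ _).mp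
    (scottContinuousOn_univ.mpr hf)

theorem continuous_orderIso {Q : Type*} [Preorder Q] [TopologicalSpace Q] [IsScott Q univ]
    (e : P ≃o Q) : Continuous e :=
  continuous_of_scottContinuous fun _ _ _ _ ha => e.isLUB_image'.mpr ha

theorem lowerVietoris_homeomorph_le_iff {X : Type*} [TopologicalSpace X] {G : Set (Set X)}
    (hG : ∀ A ∈ G, IsClosed A) (h : @Homeomorph P G _ (lowerVietoris G)) {x y : P} :
    h x ≤ h y ↔ x ≤ y := by
  let := lowerVietoris G
  rw [← lowerVietoris_specializes_iff (hG _ (h y).2), h.isInducing.specializes_iff,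
    scott_specializes_iff]

end Scott

section WithTop

variable {P : Type*} [Preorder P]

theorem isLUB_image_coe_withTop {D : Set P} {a : P} (ha : IsLUB D a) :
    IsLUB ((↑) '' D) (a : WithTop P) := by
  refine ⟨WithTop.coe_mono.mem_upperBounds_image ha.1, fun b hb => ?_⟩
  induction b with
  | top => exact le_top
  | coe b => exact WithTop.coe_le_coe.mpr (ha.2 fun d hd => WithTop.coe_le_coe.mp (hb ⟨d, hd, rfl⟩))

theorem nonempty_withTop_orderIso_insert_univ_range_Iic {P : Type*} [PartialOrder P]
    [NoTopOrder P] : Nonempty (WithTop P ≃o ↥(insert univ (range (Iic : P → Set P)))) := by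
  let e : WithTop P ↪o Set P := OrderEmbedding.ofMapLEIff (fun z => {p | ↑p ≤ z}) fun z w =>
    WithTop.forall_coe_le_iff_le
  have hrange : range e = insert univ (range Iic) := by
    rw [WithTop.range_eq]
    have htop : e ⊤ = univ := eq_univ_of_forall fun p => le_top (a := (p : WithTop P))
    have hcoe : e ∘ (↑) = Iic := funext fun x => ext fun p => WithTop.coe_le_coe
    exact congrArg₂ insert htop (congrArg range hcoe)
  exact ⟨e.orderIso.trans (OrderIso.setCongr _ _ hrange)⟩

theorem isGenericPoint_top_closure_range_coe {P : Type*} [PartialOrder P] [NoTopOrder P]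
    [TopologicalSpace (WithTop P)] [IsScott (WithTop P) univ] {z : WithTop P}
    (hz : IsGenericPoint z (closure (range ((↑) : P → WithTop P)))) :
    IsGenericPoint ⊤ (closure (range ((↑) : P → WithTop P))) := by
  suffices ⊤ ≤ z from top_le_iff.mp this ▸ hz
  refine WithTop.forall_coe_le_iff_le.mp fun p _ => ?_
  exact (isGenericPoint_iff_Iic_eq.mp hz).superset (subset_closure ⟨p, rfl⟩)

variable [TopologicalSpace P] [IsScott P univ]

theorem dirSupInacc_of_isOpen_preimage_coe_withTop
    (hdense : ∀ D : Set P, D.Nonempty → DirectedOn (· ≤ ·) D → ¬BddAbove D → Dense D)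
    {V : Set (WithTop P)} (hV : IsOpen ((↑) ⁻¹' V : Set P)) (hne : ((↑) ⁻¹' V : Set P).Nonempty)
    (htop : ⊤ ∈ V) : DirSupInacc V := by
  intro E hEne hE a ha haV
  by_cases hEtop : ⊤ ∈ E
  · exact ⟨⊤, hEtop, htop⟩
  obtain ⟨D, rfl⟩ : ∃ D : Set P, (↑) '' D = E := by
    refine subset_range_iff_exists_image_eq.mp fun z hz => ?_
    exact WithTop.ne_top_iff_exists.mp fun h => hEtop (h ▸ hz)
  have hD : DirectedOn (· ≤ ·) D :=
    (directedOn_image.mp hE).mono fun _ _ => WithTop.coe_le_coe.mp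
  suffices (D ∩ (↑) ⁻¹' V).Nonempty from image_inter_nonempty_iff.mpr this
  induction a with
  | coe a =>
    have hinacc := (IsScott.isOpen_iff_isUpperSet_and_dirSupInaccOn (D := univ)).mp hV
    exact hinacc.2 (mem_univ D) hEne.of_image hD (IsLUB.of_image WithTop.coe_le_coe ha) haV
  | top =>
    have hbdd : ¬BddAbove D := fun ⟨b, hb⟩ =>
      WithTop.not_top_le_coe b (ha.2 (WithTop.coe_mono.mem_upperBounds_image hb))
    rw [inter_comm]
    exact (hdense D hEne.of_image hD hbdd).inter_open_nonempty _ hV hne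

variable [TopologicalSpace (WithTop P)] [IsScott (WithTop P) univ]

theorem continuous_coe_withTop : Continuous ((↑) : P → WithTop P) :=
  continuous_of_scottContinuous fun _ _ _ _ => isLUB_image_coe_withTop

theorem isOpen_of_isOpen_preimage_coe_withTop
    (hdense : ∀ D : Set P, D.Nonempty → DirectedOn (· ≤ ·) D → ¬BddAbove D → Dense D)
    {V : Set (WithTop P)} (hV : IsOpen ((↑) ⁻¹' V : Set P)) (hne : ((↑) ⁻¹' V : Set P).Nonempty)
    (htop : ⊤ ∈ V) : IsOpen V := by
  rw [IsScott.isOpen_iff_isUpperSet_and_dirSupInaccOn (D := univ), dirSupInaccOn_univ]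
  refine ⟨fun z w hzw hz => ?_, dirSupInacc_of_isOpen_preimage_coe_withTop hdense hV hne htop⟩
  induction w with
  | top => exact htop
  | coe w =>
    lift z to P using fun h => WithTop.not_top_le_coe w (h ▸ hzw)
    exact IsScott.isUpperSet_of_isOpen (D := univ) hV (WithTop.coe_le_coe.mp hzw) hz

theorem continuous_recTopCoe
    (hdense : ∀ D : Set P, D.Nonempty → DirectedOn (· ≤ ·) D → ¬BddAbove D → Dense D)
    {Y : Type*} [TopologicalSpace Y] {f : P → Y} (hf : Continuous f) {y : Y}
    (hy : IsGenericPoint y (closure (range f))) :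
    Continuous (WithTop.recTopCoe y f : WithTop P → Y) := by
  refine continuous_def.mpr fun V hV => ?_
  have hyV : y ∈ V ↔ (f ⁻¹' V).Nonempty := by
    rw [hy.mem_open_set_iff hV, closure_inter_open_nonempty_iff hV, ← image_univ,
      image_inter_nonempty_iff, univ_inter]
  by_cases hne : (f ⁻¹' V).Nonempty
  · exact isOpen_of_isOpen_preimage_coe_withTop hdense (hV.preimage hf) hne (hyV.mpr hne)
  · suffices (WithTop.recTopCoe y f : WithTop P → Y) ⁻¹' V = ∅ from this ▸ isOpen_empty
    refine eq_empty_of_forall_notMem fun z hz => ?_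
    induction z with
    | top => exact hne (hyV.mp hz)
    | coe z => exact hne ⟨z, hz⟩

end WithTop

section ScottReflection

variable {K : (Y : Type u) → TopologicalSpace Y → Prop}

theorem kSets_eq_insert_univ_range_Iic {P : Type u} [Preorder P] [TopologicalSpace P]
    [IsScott P univ]
    (hT0 : ∀ (Y : Type u) (tY : TopologicalSpace Y), K Y tY → @T0Space Y tY)
    (hSober : ∀ (Y : Type u) (tY : TopologicalSpace Y), @Sober Y tY → K Y tY)
    (hirr : ∀ A : Set P, IrredClosed A → (∃ x, IsGenericPoint x A) ∨ A = univ)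
    (huniv : univ ∈ KSets K P) : KSets K P = insert univ (range Iic) := by
  refine Subset.antisymm (fun A hA => ?_) (insert_subset huniv ?_)
  · refine (hirr A (irredClosed_iff.mpr ⟨hA.2.isIrreducible hSober, hA.1⟩)).symm.imp_right ?_
    exact fun ⟨x, hx⟩ => ⟨x, isGenericPoint_iff_Iic_eq.mp hx⟩
  · rintro _ ⟨x, rfl⟩
    exact IsScott.closure_singleton (a := x) ▸ closure_singleton_mem_kSets hT0 x

variable {P : Type u} [PartialOrder P] [TopologicalSpace P] [TopologicalSpace (WithTop P)]
  [IsScott (WithTop P) univ]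

theorem isKReflection_coe_withTop [IsScott P univ] [NoTopOrder P]
    (hT0 : ∀ (Y : Type u) (tY : TopologicalSpace Y), K Y tY → @T0Space Y tY)
    (hdense : ∀ D : Set P, D.Nonempty → DirectedOn (· ≤ ·) D → ¬BddAbove D → Dense D)
    (huniv : IsKSet K P univ) (hK : K (WithTop P) ‹_›) :
    IsKReflection K P ‹_› (WithTop P) ‹_› (↑) := by
  have exists_generic := (isKSet_iff hT0).mp huniv
  simp only [image_univ] at exists_generic
  obtain ⟨z, hz⟩ := exists_generic _ hK (↑) continuous_coe_withTop
  have htop := isGenericPoint_top_closure_range_coe hz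
  refine ⟨hK, continuous_coe_withTop, fun Y tY hY f hf => ?_⟩
  have := hT0 Y tY hY
  obtain ⟨y, hy⟩ := exists_generic Y hY f hf
  refine ⟨WithTop.recTopCoe y f, ⟨continuous_recTopCoe hdense hf hy, rfl⟩, ?_⟩
  rintro g ⟨hg, rfl⟩
  funext z
  induction z with
  | coe z => rfl
  | top =>
    have hgtop := htop.image hg
    rw [closure_image_closure hg, ← range_comp] at hgtop
    exact hgtop.eq hy

theorem nonempty_homeomorph_withTop_of_isKReflection [NoTopOrder P]
    (hT0 : ∀ (Y : Type u) (tY : TopologicalSpace Y), K Y tY → @T0Space Y tY)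
    (hSober : ∀ (Y : Type u) (tY : TopologicalSpace Y), @Sober Y tY → K Y tY)
    (hKP : K (KSets K P) (lowerVietoris (KSets K P)))
    (hKSets : KSets K P = insert univ (range Iic)) {Q : Type u} [PartialOrder Q]
    [TopologicalSpace Q] [IsScott Q univ] {ξ : P → Q} (hξ : IsKReflection K P ‹_› Q ‹_› ξ) :
    Nonempty (Q ≃ₜ WithTop P) := by
  let := lowerVietoris (KSets K P)
  obtain ⟨h⟩ := hξ.nonempty_homeomorph (isKReflection_pointClosure hT0 hSober hKP)
  obtain ⟨e⟩ := nonempty_withTop_orderIso_insert_univ_range_Iic (P := P)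
  let eQ : Q ≃o KSets K P :=
    ⟨h.toEquiv, lowerVietoris_homeomorph_le_iff (fun _ hA => hA.1) h⟩
  let e' : Q ≃o WithTop P := (eQ.trans (OrderIso.setCongr _ _ hKSets)).trans e.symm
  exact ⟨⟨e'.toEquiv, continuous_orderIso e', continuous_orderIso e'.symm⟩⟩

end ScottReflection

theorem stmt13_general
    (K : (Y : Type u) → TopologicalSpace Y → Prop)
    (hT0 : ∀ (Y : Type u) (tY : TopologicalSpace Y), K Y tY → @T0Space Y tY)
    (hSober : ∀ (Y : Type u) (tY : TopologicalSpace Y), @Sober Y tY → K Y tY)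
    (hHomeo : ∀ (Y : Type u) (tY : TopologicalSpace Y) (Z : Type u) (tZ : TopologicalSpace Z),
      K Y tY → Nonempty (@Homeomorph Y Z tY tZ) → K Z tZ)
    (P : Type u) [PartialOrder P]
    (hKP : K ↥(@KSets K P (scottTop P)) (@lowerVietoris P (scottTop P) (@KSets K P (scottTop P))))
    (hirr : ∀ A : Set P, @IrredClosed P (scottTop P) A → (∃ x, A = {p | p ≤ x}) ∨ A = univ)
    (hnotK : ¬K P (scottTop P)) :
    (K (WithTop P) (scottTop (WithTop P)) ↔
      ∃ (Q : Type u) (pQ : PartialOrder Q) (ξ : P → Q),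
        IsKReflection K P (scottTop P) Q (@scottTop Q pQ.toPreorder) ξ) ∧
    (K (WithTop P) (scottTop (WithTop P)) →
      IsKReflection K P (scottTop P) (WithTop P) (scottTop (WithTop P))
        (fun x : P => (x : WithTop P))) := by
  let := scottTop P
  let := scottTop (WithTop P)
  let := lowerVietoris (KSets K P)
  have := isScott_scottTop P
  have := isScott_scottTop (WithTop P)
  have hgeneric (A : Set P) (hA : IrredClosed A) : (∃ x, IsGenericPoint x A) ∨ A = univ :=
    (hirr A hA).imp_left fun ⟨x, hx⟩ => ⟨x, isGenericPoint_iff_Iic_eq.mpr hx.symm⟩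
  obtain ⟨huniv, hnogeneric⟩ := univ_mem_kSets_of_isEmpty_homeomorph hT0 hSober hgeneric
    ⟨fun h => hnotK (hHomeo _ _ _ _ hKP ⟨h.symm⟩)⟩
  have : NoTopOrder P := ⟨fun x => not_forall.mp fun hx =>
    hnogeneric x (isGenericPoint_iff_Iic_eq.mpr (eq_univ_of_forall hx))⟩
  have hreflection := isKReflection_coe_withTop hT0
    (fun _ => dense_of_directedOn_of_not_bddAbove hgeneric) huniv.2
  refine ⟨⟨fun hK => ⟨_, _, _, hreflection hK⟩, fun ⟨Q, _, ξ, hξ⟩ => ?_⟩, hreflection⟩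
  let := scottTop Q
  have := isScott_scottTop Q
  exact hHomeo _ _ _ _ hξ.1 (nonempty_homeomorph_withTop_of_isKReflection hT0 hSober hKP
    (kSets_eq_insert_univ_range_Iic hT0 hSober hgeneric huniv) hξ)

/-- Let `P` be a poset whose irreducible Scott-closed sets are exactly the
sets `↓x` together with `P` itself, and such that `Σ P` is not a `𝐊`-space. Then `Σ P_⊤`
is a `𝐊`-space iff the `𝐊`-reflection of `Σ P` exists and is a Scott space; in which case
`Σ P_⊤` with the inclusion is a `𝐊`-reflection of `Σ P`. -/
theorem stmt13
    (K : (Y : Type u) → TopologicalSpace Y → Prop)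
    (hT0 : ∀ (Y : Type u) (tY : TopologicalSpace Y), K Y tY → @T0Space Y tY)
    (hSober : ∀ (Y : Type u) (tY : TopologicalSpace Y), @Sober Y tY → K Y tY)
    (hHomeo : ∀ (Y : Type u) (tY : TopologicalSpace Y) (Z : Type u) (tZ : TopologicalSpace Z),
      K Y tY → Nonempty (@Homeomorph Y Z tY tZ) → K Z tZ)
    (hD : ∀ (Y : Type u) (tY : TopologicalSpace Y), K Y tY → @DSpace Y tY)
    (hAdeq : Adequate K)
    (P : Type u) [PartialOrder P]
    (hirr : ∀ A : Set P, @IrredClosed P (scottTop P) A ↔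
      ((∃ x : P, A = {p : P | p ≤ x}) ∨ A = Set.univ))
    (hnotK : ¬ K P (scottTop P)) :
    (K (WithTop P) (scottTop (WithTop P)) ↔
      ∃ (Q : Type u) (pQ : PartialOrder Q) (ξ : P → Q),
        IsKReflection K P (scottTop P) Q (@scottTop Q pQ.toPreorder) ξ) ∧
    (K (WithTop P) (scottTop (WithTop P)) →
      IsKReflection K P (scottTop P) (WithTop P) (scottTop (WithTop P))
        (fun x : P => (x : WithTop P))) := by
  exact stmt13_general K hT0 hSober hHomeo P
    (hAdeq P (scottTop P) (@IsScott.instT0Space P _ (scottTop P) (isScott_scottTop P)))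
    (fun A => (hirr A).mp) hnotK
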